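/- The k-algebra homomorphism k[x,y] → k[t] × k[y] sending x ↦ (t⁷, 0) and y ↦ (t³, y) has kernel exactly the principal ideal ((x³ − y⁷)x), and hence induces an injection of R = k[x,y]/((x³ − y⁷)x) into k[t] × k[y]. -/

import Mathlib

/-!
Both factors of `(x ^ n - y ^ m) * x` come from kernels computed by a one-sided inverse of the map
modulo the expected ideal. For `x ↦ 0`, `y ↦ y` the inverse sends `y` to the class of `y` modulo
`x`. For `x ↦ t ^ m`, `y ↦ t ^ n` with `m` and `n` coprime it is only linear: monomials with the
same image `t ^ d` are congruent modulo `x ^ n - y ^ m`, so `t ^ d` can be sent to their common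
class. If `p` maps to zero in both rings, the first kernel gives `p = x * q`; then `t ^ m` times the
image of `q` in `R[t]` vanishes, so the second kernel contains `q`.
-/

theorem exists_eq_mul_of_isCoprime_of_mul_eq_mul {S : Type*} [CommSemiring S] {m n a b : S}
    (hmn : IsCoprime m n) (hab : m * a = n * b) : ∃ c, a = n * c ∧ b = m * c := by
  obtain ⟨r, s, hrs⟩ := hmn
  refine ⟨s * a + r * b, ?_, ?_⟩
  · calc a = (r * m + s * n) * a := by rw [hrs, one_mul]
      _ = r * (m * a) + n * (s * a) := by ring
      _ = n * (s * a + r * b) := by rw [hab]; ring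
  · calc b = (r * m + s * n) * b := by rw [hrs, one_mul]
      _ = m * (r * b) + s * (n * b) := by ring
      _ = m * (s * a + r * b) := by rw [← hab]; ring

theorem factorsThrough_pow_mul_pow {M : Type*} [CommMonoid M] {m n : ℕ} (hmn : m.Coprime n)
    {u v : M} (huv : u ^ n = v ^ m) :
    (fun e : ℕ × ℕ ↦ u ^ e.1 * v ^ e.2).FactorsThrough (fun e ↦ m * e.1 + n * e.2) := by
  have shift (i j c : ℕ) : u ^ (i + n * c) * v ^ j = u ^ i * v ^ (j + m * c) := by
    rw [pow_add, pow_mul, huv, ← pow_mul, pow_add, mul_assoc, mul_comm (v ^ j)]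
  rintro ⟨i, j⟩ ⟨i', j'⟩ (hweight : m * i + n * j = m * i' + n * j')
  have hdiff : (m : ℤ) * (i - i') = n * (j' - j) := by
    zify at hweight
    linear_combination hweight
  obtain ⟨c, hi, hj⟩ := exists_eq_mul_of_isCoprime_of_mul_eq_mul hmn.isCoprime hdiff
  obtain ⟨c, rfl | rfl⟩ := c.eq_nat_or_neg
  · obtain rfl : i = i' + n * c := by zify; linear_combination hi
    obtain rfl : j' = j + m * c := by zify; linear_combination hj
    exact shift i' j c
  · obtain rfl : i' = i + n * c := by zify; linear_combination -hi
    obtain rfl : j = j' + m * c := by zify; linear_combination -hj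
    exact (shift i j' c).symm

section LinearSection

variable {R A : Type*} [CommSemiring R] [CommSemiring A] [Algebra R A] {m n : ℕ} {u v : A}

theorem exists_linearMap_X_pow_mul_add_mul (hmn : m.Coprime n) (huv : u ^ n = v ^ m) :
    ∃ s : Polynomial R →ₗ[R] A, ∀ i j, s (Polynomial.X ^ (m * i + n * j)) = u ^ i * v ^ j := by
  refine ⟨(Polynomial.basisMonomials R).constr R
    (Function.extend (fun e : ℕ × ℕ ↦ m * e.1 + n * e.2) (fun e ↦ u ^ e.1 * v ^ e.2) 0),
    fun i j ↦ ?_⟩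
  rw [← Polynomial.monomial_one_right_eq_X_pow,
    ← congrFun (Polynomial.coe_basisMonomials R) (m * i + n * j), Module.Basis.constr_basis]
  exact (factorsThrough_pow_mul_pow hmn huv).extend_apply 0 (i, j)

theorem aeval_eq_zero_of_aeval_X_pow_eq_zero (hmn : m.Coprime n) (huv : u ^ n = v ^ m)
    {p : MvPolynomial (Fin 2) R}
    (hp : MvPolynomial.aeval ![(Polynomial.X : Polynomial R) ^ m, Polynomial.X ^ n] p = 0) :
    MvPolynomial.aeval ![u, v] p = 0 := by
  obtain ⟨s, hs⟩ := exists_linearMap_X_pow_mul_add_mul (R := R) hmn huv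
  have hcomp : s ∘ₗ (MvPolynomial.aeval
        ![(Polynomial.X : Polynomial R) ^ m, Polynomial.X ^ n]).toLinearMap =
      (MvPolynomial.aeval ![u, v]).toLinearMap :=
    (MvPolynomial.basisMonomials (Fin 2) R).ext fun e ↦ by
      simp [MvPolynomial.aeval_monomial, Finsupp.prod_fintype, ← pow_mul, ← pow_add, hs]
  simpa [hp] using (LinearMap.congr_fun hcomp p).symm

end LinearSection

section Kernels

variable {R : Type*} [CommRing R]

theorem ker_aeval_X_pow_X_pow {m n : ℕ} (hmn : m.Coprime n) :
    RingHom.ker (MvPolynomial.aeval ![(Polynomial.X : Polynomial R) ^ m, Polynomial.X ^ n]) =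
      Ideal.span {(MvPolynomial.X 0 : MvPolynomial (Fin 2) R) ^ n - MvPolynomial.X 1 ^ m} := by
  set J := Ideal.span {(MvPolynomial.X 0 : MvPolynomial (Fin 2) R) ^ n - MvPolynomial.X 1 ^ m}
  have hrel : Ideal.Quotient.mkₐ R J (MvPolynomial.X 0) ^ n =
      Ideal.Quotient.mkₐ R J (MvPolynomial.X 1) ^ m := by
    rw [← map_pow, ← map_pow]
    exact Ideal.Quotient.eq.mpr (Ideal.mem_span_singleton_self _)
  have hmk : MvPolynomial.aeval ![Ideal.Quotient.mkₐ R J (MvPolynomial.X 0),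
      Ideal.Quotient.mkₐ R J (MvPolynomial.X 1)] = Ideal.Quotient.mkₐ R J := by
    ext i
    fin_cases i <;> simp
  apply le_antisymm
  · intro p hp
    have hp_mk := aeval_eq_zero_of_aeval_X_pow_eq_zero hmn hrel hp
    rw [hmk] at hp_mk
    exact Ideal.Quotient.eq_zero_iff_mem.mp hp_mk
  · rw [Ideal.span_singleton_le_iff_mem]
    simp [RingHom.mem_ker, ← pow_mul, mul_comm]

theorem ker_aeval_zero_X :
    RingHom.ker (MvPolynomial.aeval ![0, (Polynomial.X : Polynomial R)]) =
      Ideal.span {(MvPolynomial.X 0 : MvPolynomial (Fin 2) R)} := by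
  set J := Ideal.span {(MvPolynomial.X 0 : MvPolynomial (Fin 2) R)}
  have hcomp : (Polynomial.aeval (Ideal.Quotient.mkₐ R J (MvPolynomial.X 1))).comp
      (MvPolynomial.aeval ![0, (Polynomial.X : Polynomial R)]) = Ideal.Quotient.mkₐ R J := by
    ext i
    fin_cases i
    · simpa using (Ideal.Quotient.eq_zero_iff_mem.mpr (Ideal.mem_span_singleton_self _)).symm
    · simp
  apply le_antisymm
  · intro p hp
    have hp_mk : Ideal.Quotient.mkₐ R J p = 0 := by
      rw [← hcomp, AlgHom.comp_apply, RingHom.mem_ker.mp hp, map_zero]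
    exact Ideal.Quotient.eq_zero_iff_mem.mp hp_mk
  · rw [Ideal.span_singleton_le_iff_mem]
    simp [RingHom.mem_ker]

theorem ker_aeval_X_pow_zero_X_pow_X {m n : ℕ} (hmn : m.Coprime n) :
    RingHom.ker (MvPolynomial.aeval ![((Polynomial.X : Polynomial R) ^ m, (0 : Polynomial R)),
        (Polynomial.X ^ n, Polynomial.X)]) =
      Ideal.span {((MvPolynomial.X 0 : MvPolynomial (Fin 2) R) ^ n - MvPolynomial.X 1 ^ m) *
        MvPolynomial.X 0} := by
  have hprod : MvPolynomial.aeval (R := R)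
        ![((Polynomial.X : Polynomial R) ^ m, (0 : Polynomial R)),
          (Polynomial.X ^ n, Polynomial.X)] =
      (MvPolynomial.aeval ![(Polynomial.X : Polynomial R) ^ m, Polynomial.X ^ n]).prod
        (MvPolynomial.aeval ![0, (Polynomial.X : Polynomial R)]) := by
    ext i : 1
    fin_cases i <;> simp
  ext p
  rw [hprod, RingHom.mem_ker, AlgHom.prod_apply, Prod.mk_eq_zero, Ideal.mem_span_singleton]
  constructor
  · rintro ⟨hcusp, haxis⟩
    rw [← RingHom.mem_ker, ker_aeval_zero_X, Ideal.mem_span_singleton] at haxis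
    obtain ⟨q, rfl⟩ := haxis
    have hq : MvPolynomial.aeval ![(Polynomial.X : Polynomial R) ^ m, Polynomial.X ^ n] q = 0 := by
      rw [map_mul, MvPolynomial.aeval_X] at hcusp
      exact (Polynomial.monic_X_pow m).mul_right_eq_zero_iff.mp hcusp
    rw [← RingHom.mem_ker, ker_aeval_X_pow_X_pow hmn, Ideal.mem_span_singleton] at hq
    rw [mul_comm]
    exact mul_dvd_mul_left _ hq
  · rintro ⟨q, rfl⟩
    simp [← pow_mul, mul_comm]

end Kernels

theorem stmt_16_general (R : Type*) [CommRing R] {m n : ℕ} (hmn : m.Coprime n) :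
    let φ : MvPolynomial (Fin 2) R →ₐ[R] Polynomial R × Polynomial R :=
      MvPolynomial.aeval
        ![((Polynomial.X : Polynomial R) ^ m, 0), ((Polynomial.X : Polynomial R) ^ n, Polynomial.X)]
    let I : Ideal (MvPolynomial (Fin 2) R) :=
      Ideal.span {((MvPolynomial.X 0 : MvPolynomial (Fin 2) R) ^ n - MvPolynomial.X 1 ^ m) *
        MvPolynomial.X 0}
    RingHom.ker (φ : MvPolynomial (Fin 2) R →+* Polynomial R × Polynomial R) = I ∧
      ∃ ψ : (MvPolynomial (Fin 2) R ⧸ I) →+* Polynomial R × Polynomial R,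
        Function.Injective ψ ∧ ∀ p, ψ (Ideal.Quotient.mk I p) = φ p := by
  intro φ I
  have hker : RingHom.ker (φ : MvPolynomial (Fin 2) R →+* Polynomial R × Polynomial R) = I :=
    ker_aeval_X_pow_zero_X_pow_X hmn
  exact ⟨hker, Ideal.Quotient.lift I φ hker.ge, (Ideal.injective_lift_iff hker.ge).mpr hker,
    fun p ↦ rfl⟩

theorem stmt_16 (k : Type*) [Field k] :
    let φ : MvPolynomial (Fin 2) k →ₐ[k] Polynomial k × Polynomial k :=
      MvPolynomial.aeval
        ![((Polynomial.X : Polynomial k) ^ 7, 0), ((Polynomial.X : Polynomial k) ^ 3, Polynomial.X)]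
    let I : Ideal (MvPolynomial (Fin 2) k) :=
      Ideal.span {((MvPolynomial.X 0 : MvPolynomial (Fin 2) k) ^ 3 - MvPolynomial.X 1 ^ 7) *
        MvPolynomial.X 0}
    RingHom.ker (φ : MvPolynomial (Fin 2) k →+* Polynomial k × Polynomial k) = I ∧
      ∃ ψ : (MvPolynomial (Fin 2) k ⧸ I) →+* Polynomial k × Polynomial k,
        Function.Injective ψ ∧ ∀ p, ψ (Ideal.Quotient.mk I p) = φ p :=
  stmt_16_general k (by norm_num : Nat.Coprime 7 3)
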